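/- arXiv:0911.5402 — 12 statements merged into one kernel-verified Lean document; each statement's English description precedes it below -/
import Mathlib

section
/- Let k be a commutative ring, (A, μ) an associative k-algebra, and α : A → A an algebra morphism. Then A_α = (A, μ_α, α), where μ_α = α ∘ μ, is a Hom-associative algebra; that is, μ_α is k-bilinear, α(μ_α(x,y)) = μ_α(α(x), α(y)) for all x, y ∈ A, and μ_α(α(x), μ_α(y,z)) = μ_α(μ_α(x,y), α(z)) for all x, y, z ∈ A. -/
open TensorProduct LinearMap

variable {k : Type*} [CommRing k]

/-- `(A, μ, α)` is a Hom-associative algebra: `α` is multiplicative with respect to the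
k-bilinear multiplication `μ`, and `μ` is Hom-associative. -/
def IsHomAssoc {A : Type*} [AddCommGroup A] [Module k A]
    (μ : A →ₗ[k] A →ₗ[k] A) (α : A →ₗ[k] A) : Prop :=
  (∀ x y, α (μ x y) = μ (α x) (α y)) ∧
  (∀ x y z, μ (α x) (μ y z) = μ (μ x y) (α z))

/-- If `(A, μ)` is an associative algebra over a commutative ring `k`
and `α : A → A` is an algebra morphism, then `A_α = (A, μ_α = α ∘ μ, α)` is a
Hom-associative algebra. -/
theorem homAssoc_of_twist {A : Type*} [AddCommGroup A] [Module k A]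
    (μ : A →ₗ[k] A →ₗ[k] A) (α : A →ₗ[k] A)
    (hassoc : ∀ x y z : A, μ (μ x y) z = μ x (μ y z))
    (hα : ∀ x y : A, α (μ x y) = μ (α x) (α y)) :
    IsHomAssoc (μ.compr₂ α) α := by
  refine ⟨fun x y => ?_, fun x y z => ?_⟩
  · simp only [compr₂_apply, hα]
  · -- Both sides equal `α² (x y z)`, products being taken in `(A, μ)`.
    simp only [compr₂_apply, ← hα, hassoc]
end

section
/- Let k be a commutative ring, (C, Δ) a coassociative k-coalgebra, and α : C → C a coalgebra morphism (i.e., (α ⊗ α) ∘ Δ = Δ ∘ α). Then C_α = (C, Δ_α, α), where Δ_α = Δ ∘ α, is a Hom-coassociative coalgebra; that is, (α ⊗ α) ∘ Δ_α = Δ_α ∘ α and (α ⊗ Δ_α) ∘ Δ_α = (Δ_α ⊗ α) ∘ Δ_α. -/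
open TensorProduct LinearMap

variable {k : Type*} [CommRing k]

/-- `(C, Δ, α)` is a Hom-coassociative coalgebra: `(α ⊗ α) ∘ Δ = Δ ∘ α` and
`(α ⊗ Δ) ∘ Δ = (Δ ⊗ α) ∘ Δ` (up to the associator of the tensor product). -/
def IsHomCoassoc {C : Type*} [AddCommGroup C] [Module k C]
    (Δ : C →ₗ[k] C ⊗[k] C) (α : C →ₗ[k] C) : Prop :=
  (TensorProduct.map α α ∘ₗ Δ = Δ ∘ₗ α) ∧
  (TensorProduct.map α Δ ∘ₗ Δ =
    (TensorProduct.assoc k C C C).toLinearMap ∘ₗ (TensorProduct.map Δ α ∘ₗ Δ))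

/-- If `(C, Δ)` is a coassociative coalgebra over a commutative ring `k`
and `α : C → C` is a coalgebra morphism, then `C_α = (C, Δ_α = Δ ∘ α, α)` is a
Hom-coassociative coalgebra. -/
theorem homCoassoc_of_twist {C : Type*} [AddCommGroup C] [Module k C]
    (Δ : C →ₗ[k] C ⊗[k] C)
    (hcoassoc : TensorProduct.map LinearMap.id Δ ∘ₗ Δ =
      (TensorProduct.assoc k C C C).toLinearMap ∘ₗ (TensorProduct.map Δ LinearMap.id ∘ₗ Δ))
    (α : C →ₗ[k] C)
    (hα : TensorProduct.map α α ∘ₗ Δ = Δ ∘ₗ α) :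
    IsHomCoassoc (Δ ∘ₗ α) α := by
  -- Factoring `α ⊗ α` out of each side and moving it past `Δ` turns Hom-coassociativity of `Δ ∘ α`
  -- into coassociativity of `Δ` precomposed with `α ∘ α`.
  have hl : TensorProduct.map α (Δ ∘ₗ α) =
      TensorProduct.map LinearMap.id Δ ∘ₗ TensorProduct.map α α := by
    rw [← TensorProduct.map_comp, LinearMap.id_comp]
  have hr : TensorProduct.map (Δ ∘ₗ α) α =
      TensorProduct.map Δ LinearMap.id ∘ₗ TensorProduct.map α α := by
    rw [← TensorProduct.map_comp, LinearMap.id_comp]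
  have hαα : TensorProduct.map α α ∘ₗ (Δ ∘ₗ α) = Δ ∘ₗ (α ∘ₗ α) := by
    rw [← LinearMap.comp_assoc, hα, LinearMap.comp_assoc]
  refine ⟨hαα, ?_⟩
  rw [hl, hr, LinearMap.comp_assoc, LinearMap.comp_assoc, hαα, ← LinearMap.comp_assoc, hcoassoc]
  simp only [LinearMap.comp_assoc]
end

section
/- Let k be a commutative ring, (H, μ, Δ) a k-bialgebra (an associative algebra and coassociative coalgebra with Δ ∘ μ = (μ ⊗ μ) ∘ (Id ⊗ τ ⊗ Id) ∘ (Δ ⊗ Δ), where τ is the twist a ⊗ b ↦ b ⊗ a), and α : H → H a bialgebra morphism (an algebra morphism that is also a coalgebra morphism). Then H_α = (H, μ_α, Δ_α, α), where μ_α = α ∘ μ and Δ_α = Δ ∘ α, is a Hom-bialgebra: (H, μ_α, α) is a Hom-associative algebra, (H, Δ_α, α) is a Hom-coassociative coalgebra, and Δ_α ∘ μ_α = (μ_α ⊗ μ_α) ∘ (Id ⊗ τ ⊗ Id) ∘ (Δ_α ⊗ Δ_α). -/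
/-!
Since `α` is a morphism for both operations, every twisted axiom reduces to the corresponding
untwisted one with `α²` applied: both sides of Hom-associativity equal `α²` of a triple product,
both sides of Hom-coassociativity equal the iterated coproduct of `α² x`, and both sides of the
compatibility condition equal `Δ (α² (μ x y))`. The last case uses that the tensor square of
`α ∘ μ` is `α ⊗ α` after the tensor square of `μ` (`map₂_compr₂_self`).
-/

open TensorProduct LinearMap

variable {k : Type*} [CommRing k]

/-- `(H, μ, Δ, α)` is a Hom-bialgebra: a Hom-associative algebra and a Hom-coassociative
coalgebra such that `Δ ∘ μ = (μ ⊗ μ) ∘ (Id ⊗ τ ⊗ Id) ∘ (Δ ⊗ Δ)`, stated elementwise as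
`Δ (μ x y) = map₂ μ μ (Δ x) (Δ y)`. -/
def IsHomBialgebra {H : Type*} [AddCommGroup H] [Module k H]
    (μ : H →ₗ[k] H →ₗ[k] H) (Δ : H →ₗ[k] H ⊗[k] H) (α : H →ₗ[k] H) : Prop :=
  IsHomAssoc μ α ∧ IsHomCoassoc Δ α ∧
  ∀ x y, Δ (μ x y) = TensorProduct.map₂ μ μ (Δ x) (Δ y)

theorem map₂_compr₂_self {H : Type*} [AddCommGroup H] [Module k H]
    (μ : H →ₗ[k] H →ₗ[k] H) (α : H →ₗ[k] H) (s t : H ⊗[k] H) :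
    TensorProduct.map₂ (μ.compr₂ α) (μ.compr₂ α) s t =
      TensorProduct.map α α (TensorProduct.map₂ μ μ s t) := by
  induction s with
  | zero => simp
  | add s₁ s₂ h₁ h₂ => simp only [map_add, LinearMap.add_apply, h₁, h₂]
  | tmul a b =>
    induction t with
    | zero => simp
    | add t₁ t₂ h₁ h₂ => simp only [map_add, h₁, h₂]
    | tmul c d => simp

/-- If `(H, μ, Δ)` is a bialgebra over a commutative ring `k` and
`α : H → H` is a bialgebra morphism, then `H_α = (H, μ_α = α ∘ μ, Δ_α = Δ ∘ α, α)` is a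
Hom-bialgebra. -/
theorem homBialgebra_of_twist {H : Type*} [AddCommGroup H] [Module k H]
    (μ : H →ₗ[k] H →ₗ[k] H) (Δ : H →ₗ[k] H ⊗[k] H) (α : H →ₗ[k] H)
    (hassoc : ∀ x y z : H, μ (μ x y) z = μ x (μ y z))
    (hcoassoc : TensorProduct.map LinearMap.id Δ ∘ₗ Δ =
      (TensorProduct.assoc k H H H).toLinearMap ∘ₗ (TensorProduct.map Δ LinearMap.id ∘ₗ Δ))
    (hcompat : ∀ x y : H, Δ (μ x y) = TensorProduct.map₂ μ μ (Δ x) (Δ y))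
    (hαμ : ∀ x y : H, α (μ x y) = μ (α x) (α y))
    (hαΔ : TensorProduct.map α α ∘ₗ Δ = Δ ∘ₗ α) :
    IsHomBialgebra (μ.compr₂ α) (Δ ∘ₗ α) α := by
  have hΔ : ∀ x, TensorProduct.map α α (Δ x) = Δ (α x) := fun x => LinearMap.congr_fun hαΔ x
  refine ⟨⟨fun x y => ?_, fun x y z => ?_⟩, ⟨?_, ?_⟩, fun x y => ?_⟩
  · simp only [LinearMap.compr₂_apply, hαμ]
  · simp only [LinearMap.compr₂_apply, hαμ, hassoc]
  · rw [← LinearMap.comp_assoc, hαΔ]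
  · have hl : TensorProduct.map α (Δ ∘ₗ α) =
        TensorProduct.map LinearMap.id Δ ∘ₗ TensorProduct.map α α := by
      rw [← TensorProduct.map_comp, LinearMap.id_comp]
    have hr : TensorProduct.map (Δ ∘ₗ α) α =
        TensorProduct.map Δ LinearMap.id ∘ₗ TensorProduct.map α α := by
      rw [← TensorProduct.map_comp, LinearMap.id_comp]
    ext x
    rw [hl, hr]
    simp only [LinearMap.comp_apply, hΔ]
    exact LinearMap.congr_fun hcoassoc (α (α x))
  · rw [map₂_compr₂_self]
    simp only [LinearMap.comp_apply, LinearMap.compr₂_apply]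
    rw [← hcompat, hΔ, hαμ x y]
end

section
/- Let (A, μ, α) be a Hom-associative algebra over a commutative ring k. Then for each integer n ≥ 0, the triple A^n = (A, μ^(n), α^(2^n)), where μ^(n) = α^(2^n − 1) ∘ μ and α^(2^n) denotes the (2^n)-fold composite of α, is again a Hom-associative algebra. -/
open TensorProduct LinearMap

variable {k : Type*} [CommRing k]

/-- Every power of the twisting map is multiplicative. -/
theorem hom_pow_map {A : Type*} [AddCommGroup A] [Module k A]
    (μ : A →ₗ[k] A →ₗ[k] A) (α : A →ₗ[k] A) (h : ∀ x y, α (μ x y) = μ (α x) (α y))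
    (m : ℕ) (x y : A) : (α ^ m) (μ x y) = μ ((α ^ m) x) ((α ^ m) y) := by
  induction m with
  | zero => simp
  | succ m ih => simp only [pow_succ', Module.End.mul_apply, ih, h]

/-- If `(A, μ, α)` is a Hom-associative algebra, then for each `n ≥ 0`
the `n`-th derived triple `Aⁿ = (A, μ⁽ⁿ⁾ = α^(2ⁿ−1) ∘ μ, α^(2ⁿ))` is a
Hom-associative algebra. -/
theorem derived_homAssoc {A : Type*} [AddCommGroup A] [Module k A]
    (μ : A →ₗ[k] A →ₗ[k] A) (α : A →ₗ[k] A)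
    (h : IsHomAssoc μ α) :
    ∀ n : ℕ, IsHomAssoc (μ.compr₂ (α ^ (2 ^ n - 1))) (α ^ (2 ^ n)) := by
  intro n
  obtain ⟨m, hm⟩ : ∃ m, 2 ^ n = m + 1 := Nat.exists_eq_succ_of_ne_zero (by positivity)
  have key := hom_pow_map μ α h.1
  rw [hm, Nat.add_sub_cancel]
  refine ⟨fun x y => ?_, fun x y z => ?_⟩
  · simp only [LinearMap.compr₂_apply]
    rw [← key (m + 1)]
    exact LinearMap.congr_fun (pow_mul_comm α (m + 1) m) (μ x y)
  · simp only [LinearMap.compr₂_apply]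
    -- Pulling `α ^ m` out of both factors leaves Hom-associativity of `μ` itself.
    rw [pow_succ, Module.End.mul_apply, Module.End.mul_apply, ← key m, ← key m, h.2]
end

section
/- Let (C, Δ, α) be a Hom-coassociative coalgebra over a commutative ring k. Then for each integer n ≥ 0, the triple C^n = (C, Δ^(n), α^(2^n)), where Δ^(n) = Δ ∘ α^(2^n − 1), is again a Hom-coassociative coalgebra. -/
/-!
Comultiplicativity says that `Δ` intertwines `α` with `α ⊗ α`, hence `α^m` with `α^m ⊗ α^m` for
every `m` (`map_pow_comp`). Each side of Hom-coassociativity for `(Δ ∘ α^m, α^(m+1))` is then the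
corresponding side for `(Δ, α)` precomposed with `α^m ∘ α^m`. So twisting by any `m` preserves
Hom-coassociativity (`IsHomCoassoc.twist`), and the `n`-th derived triple is the case
`m = 2^n - 1`.
-/

open TensorProduct LinearMap

variable {k : Type*} [CommRing k]

theorem map_pow_comp {C : Type*} [AddCommGroup C] [Module k C]
    {Δ : C →ₗ[k] C ⊗[k] C} {α : C →ₗ[k] C}
    (h : TensorProduct.map α α ∘ₗ Δ = Δ ∘ₗ α) (m : ℕ) :
    TensorProduct.map (α ^ m) (α ^ m) ∘ₗ Δ = Δ ∘ₗ (α ^ m) := by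
  induction m with
  | zero => simp [Module.End.one_eq_id]
  | succ m ih =>
    rw [pow_succ, Module.End.mul_eq_comp, TensorProduct.map_comp, LinearMap.comp_assoc, h,
      ← LinearMap.comp_assoc, ih, LinearMap.comp_assoc]

theorem IsHomCoassoc.twist {C : Type*} [AddCommGroup C] [Module k C]
    {Δ : C →ₗ[k] C ⊗[k] C} {α : C →ₗ[k] C} (h : IsHomCoassoc Δ α) (m : ℕ) :
    IsHomCoassoc (Δ ∘ₗ (α ^ m)) (α ^ (m + 1)) := by
  have hm := map_pow_comp h.1 m
  refine ⟨?_, ?_⟩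
  · rw [← LinearMap.comp_assoc, map_pow_comp h.1, LinearMap.comp_assoc, LinearMap.comp_assoc,
      ← Module.End.mul_eq_comp, ← Module.End.mul_eq_comp, ← pow_add, ← pow_add, add_comm]
  · have hα : α ^ (m + 1) = α ∘ₗ (α ^ m) := by rw [pow_succ', Module.End.mul_eq_comp]
    have key : ∀ f : C ⊗[k] C →ₗ[k] C ⊗[k] (C ⊗[k] C),
        (f ∘ₗ TensorProduct.map (α ^ m) (α ^ m)) ∘ₗ (Δ ∘ₗ (α ^ m)) =
          (f ∘ₗ Δ) ∘ₗ ((α ^ m) ∘ₗ (α ^ m)) := fun f => by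
      rw [LinearMap.comp_assoc, ← LinearMap.comp_assoc (α ^ m) Δ, hm]
      simp only [LinearMap.comp_assoc]
    rw [hα, TensorProduct.map_comp, TensorProduct.map_comp, key, h.2]
    simpa only [LinearMap.comp_assoc] using
      (key ((TensorProduct.assoc k C C C).toLinearMap ∘ₗ TensorProduct.map Δ α)).symm

/-- If `(C, Δ, α)` is a Hom-coassociative coalgebra, then for each
`n ≥ 0` the `n`-th derived triple `Cⁿ = (C, Δ⁽ⁿ⁾ = Δ ∘ α^(2ⁿ−1), α^(2ⁿ))` is a
Hom-coassociative coalgebra. -/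
theorem derived_homCoassoc {C : Type*} [AddCommGroup C] [Module k C]
    (Δ : C →ₗ[k] C ⊗[k] C) (α : C →ₗ[k] C)
    (h : IsHomCoassoc Δ α) :
    ∀ n : ℕ, IsHomCoassoc (Δ ∘ₗ (α ^ (2 ^ n - 1))) (α ^ (2 ^ n)) := by
  intro n
  have hn : 2 ^ n - 1 + 1 = 2 ^ n := Nat.sub_add_cancel Nat.one_le_two_pow
  simpa only [hn] using h.twist (2 ^ n - 1)
end

section
/- Let (A, μ, α_A) be a Hom-associative algebra over a commutative ring k and (M, α_M) an A-module with structure map ρ : A ⊗ M → M. For each integer n ≥ 0, the map ρ^{n,0} = ρ ∘ (α_A^n ⊗ Id_M) : A ⊗ M → M (i.e., (a, m) ↦ α_A^n(a)·m) gives the Hom-module (M, α_M) the structure of an A-module. -/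
/-! Since `αA` commutes with itself and is multiplicative for `μ`, every iterate `αA ^ n` is an
endomorphism of the Hom-associative algebra `(A, μ, αA)`. Restricting the action along such an
endomorphism preserves both module axioms. -/

open TensorProduct LinearMap

variable {k : Type*} [CommRing k]

/-- `(M, αM, ρ)` is a module over the Hom-associative algebra `(A, μ, αA)`:
`αM (a·m) = αA a · αM m` and `αA a · (b·m) = (ab) · αM m`. -/
def IsHomModule {A M : Type*} [AddCommGroup A] [Module k A] [AddCommGroup M] [Module k M]
    (μ : A →ₗ[k] A →ₗ[k] A) (αA : A →ₗ[k] A) (αM : M →ₗ[k] M)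
    (ρ : A →ₗ[k] M →ₗ[k] M) : Prop :=
  (∀ a m, αM (ρ a m) = ρ (αA a) (αM m)) ∧
  (∀ a b m, ρ (αA a) (ρ b m) = ρ (μ a b) (αM m))

/-- Iterates of a multiplicative map are multiplicative. -/
theorem pow_map_mul {A : Type*} [AddCommGroup A] [Module k A]
    (μ : A →ₗ[k] A →ₗ[k] A) (α : A →ₗ[k] A) (h : ∀ x y, α (μ x y) = μ (α x) (α y))
    (n : ℕ) (x y : A) : (α ^ n) (μ x y) = μ ((α ^ n) x) ((α ^ n) y) := by
  induction n with
  | zero => simp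
  | succ n ih => simp only [pow_succ', Module.End.mul_apply, ih, h]

/-- If `(A, μ, αA)` is a Hom-associative algebra and `(M, αM)` is an
`A`-module with structure map `ρ`, then for each `n ≥ 0` the map
`ρ^{n,0} = ρ ∘ (αAⁿ ⊗ Id)` (i.e. `(a, m) ↦ αAⁿ(a)·m`) again gives `(M, αM)` an
`A`-module structure. -/
theorem twisted_homModule {A M : Type*} [AddCommGroup A] [Module k A]
    [AddCommGroup M] [Module k M]
    (μ : A →ₗ[k] A →ₗ[k] A) (αA : A →ₗ[k] A) (αM : M →ₗ[k] M)
    (ρ : A →ₗ[k] M →ₗ[k] M)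
    (hA : IsHomAssoc μ αA)
    (hM : IsHomModule μ αA αM ρ) :
    ∀ n : ℕ, IsHomModule μ αA αM (ρ ∘ₗ (αA ^ n)) := by
  intro n
  have hcomm (a : A) : (αA ^ n) (αA a) = αA ((αA ^ n) a) := by
    rw [← Module.End.mul_apply, ← Module.End.mul_apply, ← pow_succ, pow_succ']
  refine ⟨fun a m => ?_, fun a b m => ?_⟩
  · simp only [LinearMap.comp_apply, hcomm, hM.1]
  · simp only [LinearMap.comp_apply, hcomm, hM.2, pow_map_mul μ αA hA.1]
end

section
/- Let (A, μ, α_A) be a Hom-associative algebra over a commutative ring k and (M, α_M) an A-module with structure map ρ : A ⊗ M → M. For all integers n, k ≥ 0, the map ρ^{n,k} = α_M^(2^k − 1) ∘ ρ ∘ (α_A^n ⊗ Id_M) : A ⊗ M → M gives the Hom-module M^k = (M, α_M^(2^k)) the structure of a module over the k-th derived Hom-associative algebra A^k = (A, μ^(k) = α_A^(2^k − 1) ∘ μ, α_A^(2^k)). -/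
/-! Iterating multiplicativity gives `αM ^ s (a m) = (αA ^ s a) (αM ^ s m)` and
`αA ^ n (a b) = (αA ^ n a) (αA ^ n b)`. With `s = 2 ^ m - 1`, so that `2 ^ m = s + 1`, the powers of
`αM` can be pulled out of the action: both sides of the Hom-associativity law for the twisted
action become `αM ^ (2 * s)` applied to the two sides of the original law at `αA ^ n a`, `αA ^ n b`
and `m`. The argument works for every `s`. -/

open TensorProduct LinearMap

variable {k : Type*} [CommRing k]

/-- The twisted structure map `(a, m) ↦ g (ρ (f a) m)`. -/
def twistAction {A M : Type*} [AddCommGroup A] [Module k A] [AddCommGroup M] [Module k M]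
    (ρ : A →ₗ[k] M →ₗ[k] M) (f : A →ₗ[k] A) (g : M →ₗ[k] M) : A →ₗ[k] M →ₗ[k] M :=
  (LinearMap.llcomp k M M M g ∘ₗ ρ) ∘ₗ f

/-- Powers of a multiplicative map are multiplicative. Three modules are allowed so that this applies
both to the product of `A` and to the action on `M`. -/
lemma pow_apply_bilin {X Y Z : Type*} [AddCommGroup X] [Module k X] [AddCommGroup Y] [Module k Y]
    [AddCommGroup Z] [Module k Z] {β : X →ₗ[k] Y →ₗ[k] Z} {f : X →ₗ[k] X} {g : Y →ₗ[k] Y}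
    {h : Z →ₗ[k] Z} (H : ∀ x y, h (β x y) = β (f x) (g y)) (s : ℕ) (x : X) (y : Y) :
    (h ^ s) (β x y) = β ((f ^ s) x) ((g ^ s) y) := by
  induction s with
  | zero => rfl
  | succ s ih => simp only [pow_succ', Module.End.mul_apply, ih, H]

/-- If `(A, μ, αA)` is a Hom-associative algebra and `(M, αM)` is an
`A`-module with structure map `ρ`, then for all `n, m ≥ 0` the map
`ρ^{n,m} = αM^(2ᵐ−1) ∘ ρ ∘ (αAⁿ ⊗ Id)` gives `Mᵐ = (M, αM^(2ᵐ))` the structure of a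
module over the `m`-th derived Hom-associative algebra
`Aᵐ = (A, αA^(2ᵐ−1) ∘ μ, αA^(2ᵐ))`. -/
theorem derived_homModule {A M : Type*} [AddCommGroup A] [Module k A]
    [AddCommGroup M] [Module k M]
    (μ : A →ₗ[k] A →ₗ[k] A) (αA : A →ₗ[k] A) (αM : M →ₗ[k] M)
    (ρ : A →ₗ[k] M →ₗ[k] M)
    (hA : IsHomAssoc μ αA)
    (hM : IsHomModule μ αA αM ρ) :
    ∀ n m : ℕ, IsHomModule (μ.compr₂ (αA ^ (2 ^ m - 1))) (αA ^ (2 ^ m)) (αM ^ (2 ^ m))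
      (twistAction ρ (αA ^ n) (αM ^ (2 ^ m - 1))) := by
  intro n m
  -- Writing `2 ^ m = s + 1` removes the truncated subtraction.
  obtain ⟨s, hs⟩ : ∃ s, 2 ^ m = s + 1 := Nat.exists_eq_succ_of_ne_zero (by positivity)
  rw [hs, Nat.add_sub_cancel]
  have hμ := pow_apply_bilin hA.1
  have hρ := pow_apply_bilin hM.1
  have cA : ∀ i j x, (αA ^ i) ((αA ^ j) x) = (αA ^ (i + j)) x := fun i j x => by
    rw [pow_add, Module.End.mul_apply]
  have cM : ∀ i j x, (αM ^ i) ((αM ^ j) x) = (αM ^ (i + j)) x := fun i j x => by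
    rw [pow_add, Module.End.mul_apply]
  have tw : ∀ a x, twistAction ρ (αA ^ n) (αM ^ s) a x = (αM ^ s) (ρ ((αA ^ n) a) x) :=
    fun _ _ => rfl
  refine ⟨fun a x => ?_, fun a b x => ?_⟩
  · simp only [tw, hρ, cA, cM, add_assoc, add_comm, add_left_comm]
  · calc twistAction ρ (αA ^ n) (αM ^ s) ((αA ^ (s + 1)) a)
          (twistAction ρ (αA ^ n) (αM ^ s) b x)
        = (αM ^ s) ((αM ^ s) (ρ (αA ((αA ^ n) a)) (ρ ((αA ^ n) b) x))) := by
          rw [tw, tw, hρ s (αA _), ← Module.End.mul_apply αA, ← pow_succ', cA, cA,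
            show n + (s + 1) = s + (n + 1) by omega]
      _ = (αM ^ s) ((αM ^ s) (ρ ((αA ^ n) (μ a b)) (αM x))) := by rw [hM.2, hμ]
      _ = _ := by
          rw [tw, hρ s ((αA ^ n) _), LinearMap.compr₂_apply, cA, cA, add_comm n s, pow_succ,
            Module.End.mul_apply]
end

section
/- Let (A, μ_A) be an associative algebra over a commutative ring k and M an A-module in the usual sense with structure map ρ : A ⊗ M → M. Suppose α_A : A → A is an algebra morphism and α_M : M → M is a k-linear map such that α_M ∘ ρ = ρ ∘ (α_A ⊗ α_M). Then for all integers n, k ≥ 0, the map ρ_α^{n,k} = α_M^(2^k) ∘ ρ ∘ (α_A^n ⊗ Id_M) : A ⊗ M → M gives the Hom-module (M, α_M^(2^k)) the structure of a module over the Hom-associative algebra A_β = (A, μ_β = β ∘ μ_A, β), where β = α_A^(2^k). -/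
/-! The identity `αM ∘ ρ = ρ ∘ (αA ⊗ αM)` and the multiplicativity of `αA` both pass to powers.
Write `β = αA ^ (2 ^ m)`, `γ = αM ^ (2 ^ m)` and `f = αA ^ n`. Moving `γ` inside `ρ` and using that
the powers `β` and `f` commute, both sides of the multiplicativity condition become
`γ (ρ (f (β a)) (γ x))`, and both sides of Hom-associativity become
`γ (ρ (μ (f (β a)) (f (β b))) (γ x))`. Nothing depends on the exponent being a power of `2`. -/

open TensorProduct LinearMap

variable {k : Type*} [CommRing k]

theorem pow_apply_intertwine {A M : Type*} [AddCommGroup A] [Module k A]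
    [AddCommGroup M] [Module k M] (ρ : A →ₗ[k] M →ₗ[k] M)
    (αA : A →ₗ[k] A) (αM : M →ₗ[k] M)
    (h : ∀ (a : A) (x : M), αM (ρ a x) = ρ (αA a) (αM x)) (j : ℕ) (a : A) (x : M) :
    (αM ^ j) (ρ a x) = ρ ((αA ^ j) a) ((αM ^ j) x) := by
  induction j with
  | zero => simp
  | succ j ih => simp only [pow_succ', Module.End.mul_apply, ih, h]

/-- Let `(A, μ)` be an associative algebra, `M` an `A`-module in the
usual sense with structure map `ρ`, `αA : A → A` an algebra morphism and `αM : M → M` a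
linear map with `αM ∘ ρ = ρ ∘ (αA ⊗ αM)`.  Then for all `n, m ≥ 0` the map
`ρ_α^{n,m} = αM^(2ᵐ) ∘ ρ ∘ (αAⁿ ⊗ Id)` gives `(M, αM^(2ᵐ))` the structure of a module
over the Hom-associative algebra `A_β = (A, β ∘ μ, β)` with `β = αA^(2ᵐ)`. -/
theorem twist_module_of_assoc {A M : Type*} [AddCommGroup A] [Module k A]
    [AddCommGroup M] [Module k M]
    (μ : A →ₗ[k] A →ₗ[k] A)
    (hassoc : ∀ x y z : A, μ (μ x y) z = μ x (μ y z))
    (ρ : A →ₗ[k] M →ₗ[k] M)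
    (hmod : ∀ (a b : A) (x : M), ρ a (ρ b x) = ρ (μ a b) x)
    (αA : A →ₗ[k] A) (hαA : ∀ x y : A, αA (μ x y) = μ (αA x) (αA y))
    (αM : M →ₗ[k] M)
    (hcompat : ∀ (a : A) (x : M), αM (ρ a x) = ρ (αA a) (αM x)) :
    ∀ n m : ℕ, IsHomModule (μ.compr₂ (αA ^ (2 ^ m))) (αA ^ (2 ^ m)) (αM ^ (2 ^ m))
      (twistAction ρ (αA ^ n) (αM ^ (2 ^ m))) := by
  intro n m
  generalize 2 ^ m = j
  have hM := pow_apply_intertwine ρ αA αM hcompat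
  -- Multiplicativity of `αA` is the same compatibility for `A` acting on itself.
  have hA := pow_apply_intertwine μ αA αA hαA
  have hcomm : ∀ a, (αA ^ n) ((αA ^ j) a) = (αA ^ j) ((αA ^ n) a) := fun a => by
    rw [← Module.End.mul_apply, ← Module.End.mul_apply, ← pow_add, ← pow_add, Nat.add_comm]
  have htw : ∀ a x, twistAction ρ (αA ^ n) (αM ^ j) a x = (αM ^ j) (ρ ((αA ^ n) a) x) :=
    fun _ _ => rfl
  refine ⟨fun a x => ?_, fun a b x => ?_⟩
  · rw [htw, htw, hM j ((αA ^ n) a) x, hcomm]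
  · rw [htw, htw, htw, hM j ((αA ^ n) b) x, hmod, LinearMap.compr₂_apply, hcomm, hcomm, hA n, hA j]
end

section
/- Let (C, Δ, α_C) be a Hom-coassociative coalgebra over a commutative ring k and (M, α_M) a C-comodule with structure map ρ : M → C ⊗ M. For all integers n, k ≥ 0, the map ρ^{n,k} = (α_C^n ⊗ Id_M) ∘ ρ ∘ α_M^(2^k − 1) : M → C ⊗ M gives the Hom-module M^k = (M, α_M^(2^k)) the structure of a comodule over the k-th derived Hom-coassociative coalgebra C^k = (C, Δ^(k) = Δ ∘ α_C^(2^k − 1), α_C^(2^k)). -/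
/-!
The powers of the structure maps are comultiplicative, so `ρ` and `Δ` intertwine `αM ^ j` and
`αC ^ j` with the corresponding tensor products of powers. Write `p = 2 ^ m - 1`, so that
`2 ^ m = p + 1`. Moving `αM ^ p` through the inner `ρ` and `αC ^ n` through `Δ`, the two sides of
Hom-coassociativity for `ρ^{n,m}` become
`(αC ^ n ⊗ αC ^ n ⊗ id) ∘ (αC ⊗ ρ) ∘ ρ ∘ αM ^ p ∘ αM ^ p` and
`(αC ^ n ⊗ αC ^ n ⊗ id) ∘ (Δ ⊗ αM) ∘ ρ ∘ αM ^ p ∘ αM ^ p`,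
which agree by Hom-coassociativity of `ρ`.
-/

open TensorProduct LinearMap

variable {k : Type*} [CommRing k]

/-- `(M, αM, ρ)` is a comodule over the Hom-coassociative coalgebra `(C, Δ, αC)`:
`ρ ∘ αM = (αC ⊗ αM) ∘ ρ` and `(αC ⊗ ρ) ∘ ρ = (Δ ⊗ αM) ∘ ρ` (up to the associator). -/
def IsHomComodule {C M : Type*} [AddCommGroup C] [Module k C] [AddCommGroup M] [Module k M]
    (Δ : C →ₗ[k] C ⊗[k] C) (αC : C →ₗ[k] C) (αM : M →ₗ[k] M)
    (ρ : M →ₗ[k] C ⊗[k] M) : Prop :=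
  (ρ ∘ₗ αM = TensorProduct.map αC αM ∘ₗ ρ) ∧
  (TensorProduct.map αC ρ ∘ₗ ρ =
    (TensorProduct.assoc k C C M).toLinearMap ∘ₗ (TensorProduct.map Δ αM ∘ₗ ρ))

theorem comp_pow_eq_map_pow_comp {X Y Z : Type*} [AddCommGroup X] [Module k X] [AddCommGroup Y]
    [Module k Y] [AddCommGroup Z] [Module k Z] {f : X →ₗ[k] Y ⊗[k] Z}
    {a : X →ₗ[k] X} {b : Y →ₗ[k] Y} {c : Z →ₗ[k] Z}
    (h : f ∘ₗ a = TensorProduct.map b c ∘ₗ f) (j : ℕ) :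
    f ∘ₗ (a ^ j) = TensorProduct.map (b ^ j) (c ^ j) ∘ₗ f := by
  rw [← TensorProduct.map_pow]
  exact (Module.End.commute_pow_left_of_commute h.symm j).symm

/-- The case of an arbitrary exponent `p` in place of `2 ^ m - 1`. -/
theorem isHomComodule_twist {C M : Type*} [AddCommGroup C] [Module k C]
    [AddCommGroup M] [Module k M]
    {Δ : C →ₗ[k] C ⊗[k] C} {αC : C →ₗ[k] C} {αM : M →ₗ[k] M} {ρ : M →ₗ[k] C ⊗[k] M}
    (hC : IsHomCoassoc Δ αC) (hM : IsHomComodule Δ αC αM ρ) (n p : ℕ) :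
    IsHomComodule (Δ ∘ₗ (αC ^ p)) (αC ^ (p + 1)) (αM ^ (p + 1))
      (TensorProduct.map (αC ^ n) LinearMap.id ∘ₗ (ρ ∘ₗ (αM ^ p))) := by
  have hρ := comp_pow_eq_map_pow_comp hM.1
  have hΔ := comp_pow_eq_map_pow_comp hC.1.symm
  have powC (i j : ℕ) : (αC ^ i) ∘ₗ (αC ^ j) = αC ^ (i + j) := (pow_add αC i j).symm
  have powM (i j : ℕ) : (αM ^ i) ∘ₗ (αM ^ j) = αM ^ (i + j) := (pow_add αM i j).symm
  constructor
  · rw [comp_assoc, comp_assoc, powM, hρ, hρ, ← comp_assoc, ← comp_assoc, ← comp_assoc,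
      ← TensorProduct.map_comp, ← TensorProduct.map_comp, ← TensorProduct.map_comp]
    simp only [powC, powM, id_comp, comp_id]
    congr 3 <;> omega
  · have hL : TensorProduct.map (αC ^ (p + 1))
          (TensorProduct.map (αC ^ n) LinearMap.id ∘ₗ (ρ ∘ₗ (αM ^ p))) ∘ₗ
          TensorProduct.map (αC ^ n) LinearMap.id =
        TensorProduct.map (αC ^ n) (TensorProduct.map (αC ^ n) LinearMap.id) ∘ₗ
          TensorProduct.map αC ρ ∘ₗ TensorProduct.map (αC ^ p) (αM ^ p) := by
      rw [← TensorProduct.map_comp, ← TensorProduct.map_comp, ← TensorProduct.map_comp,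
        comp_id, powC]
      congr 1
      change _ = αC ^ n * (αC * αC ^ p)
      rw [← pow_succ', ← pow_add, add_comm]
    have hR : TensorProduct.map (Δ ∘ₗ (αC ^ p)) (αM ^ (p + 1)) ∘ₗ
          TensorProduct.map (αC ^ n) LinearMap.id =
        TensorProduct.map (TensorProduct.map (αC ^ n) (αC ^ n)) LinearMap.id ∘ₗ
          TensorProduct.map Δ αM ∘ₗ TensorProduct.map (αC ^ p) (αM ^ p) := by
      rw [← TensorProduct.map_comp, ← TensorProduct.map_comp, ← TensorProduct.map_comp,
        comp_id, id_comp, ← comp_assoc (αC ^ p) Δ, ← hΔ, comp_assoc, comp_assoc, powC, powC,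
        add_comm p n, pow_succ' αM p]
      rfl
    -- naturality of the associator
    have hA : TensorProduct.map (αC ^ n) (TensorProduct.map (αC ^ n) LinearMap.id) ∘ₗ
          (TensorProduct.assoc k C C M).toLinearMap =
        (TensorProduct.assoc k C C M).toLinearMap ∘ₗ
          TensorProduct.map (TensorProduct.map (αC ^ n) (αC ^ n)) LinearMap.id :=
      TensorProduct.ext_threefold fun _ _ _ => rfl
    rw [← comp_assoc, hL, ← comp_assoc (ρ ∘ₗ _), hR]
    simp only [comp_assoc]
    rw [← comp_assoc (αM ^ p) ρ, ← hρ, comp_assoc, ← comp_assoc _ ρ (TensorProduct.map αC ρ),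
      hM.2, ← comp_assoc _ _ (TensorProduct.map (αC ^ n) _),
      ← comp_assoc _ (TensorProduct.assoc k C C M).toLinearMap, hA]
    simp only [comp_assoc]

/-- If `(C, Δ, αC)` is a Hom-coassociative coalgebra and `(M, αM)` is a
`C`-comodule with structure map `ρ`, then for all `n, m ≥ 0` the map
`ρ^{n,m} = (αCⁿ ⊗ Id) ∘ ρ ∘ αM^(2ᵐ−1)` gives `Mᵐ = (M, αM^(2ᵐ))` the structure of a
comodule over the `m`-th derived Hom-coassociative coalgebra
`Cᵐ = (C, Δ ∘ αC^(2ᵐ−1), αC^(2ᵐ))`. -/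
theorem derived_homComodule {C M : Type*} [AddCommGroup C] [Module k C]
    [AddCommGroup M] [Module k M]
    (Δ : C →ₗ[k] C ⊗[k] C) (αC : C →ₗ[k] C) (αM : M →ₗ[k] M)
    (ρ : M →ₗ[k] C ⊗[k] M)
    (hC : IsHomCoassoc Δ αC)
    (hM : IsHomComodule Δ αC αM ρ) :
    ∀ n m : ℕ, IsHomComodule (Δ ∘ₗ (αC ^ (2 ^ m - 1))) (αC ^ (2 ^ m)) (αM ^ (2 ^ m))
      (TensorProduct.map (αC ^ n) LinearMap.id ∘ₗ (ρ ∘ₗ (αM ^ (2 ^ m - 1)))) := by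
  intro n m
  obtain ⟨p, hp⟩ : ∃ p, 2 ^ m = p + 1 := Nat.exists_eq_add_one.2 (by positivity)
  rw [hp, Nat.add_sub_cancel]
  exact isHomComodule_twist hC hM n p
end

section
/- Let (C, Δ_C) be a coassociative coalgebra over a commutative ring k and M a C-comodule in the usual sense with structure map ρ : M → C ⊗ M (i.e., (Δ_C ⊗ Id_M) ∘ ρ = (Id_C ⊗ ρ) ∘ ρ). Suppose α_C : C → C is a coalgebra morphism and α_M : M → M is a k-linear map such that ρ ∘ α_M = (α_C ⊗ α_M) ∘ ρ. Then for all integers n, k ≥ 0, the map ρ_α^{n,k} = (α_C^n ⊗ Id_M) ∘ ρ ∘ α_M^(2^k) : M → C ⊗ M gives the Hom-module (M, α_M^(2^k)) the structure of a comodule over the Hom-coassociative coalgebra C_β = (C, Δ_β = Δ_C ∘ β, β), where β = α_C^(2^k). -/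
/-!
Write `b = αC ^ (2 ^ m)`, `a = αM ^ (2 ^ m)` and `c = αC ^ n`. All that matters is that `b` and `c`
commute, that `c` is a coalgebra morphism and that `ρ ∘ a = (b ⊗ a) ∘ ρ`; these properties pass
from `αC` and `αM` to their powers. The twisted coaction is `(c ⊗ 1) ∘ ρ ∘ a`, and, moving `b ⊗ a`
across `ρ`, both sides of its Hom-coassociativity become the ordinary coassociativity of `ρ`
precomposed with `a ∘ a` and followed by `c ⊗ (c ⊗ 1)`.
-/

open TensorProduct LinearMap

variable {k : Type*} [CommRing k]

theorem coaction_comp_pow {C M : Type*} [AddCommGroup C] [Module k C]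
    [AddCommGroup M] [Module k M] (ρ : M →ₗ[k] C ⊗[k] M) (αC : C →ₗ[k] C) (αM : M →ₗ[k] M)
    (h : ρ ∘ₗ αM = TensorProduct.map αC αM ∘ₗ ρ) (n : ℕ) :
    ρ ∘ₗ (αM ^ n) = TensorProduct.map (αC ^ n) (αM ^ n) ∘ₗ ρ := by
  rw [← TensorProduct.map_pow]
  exact Module.End.commute_pow_left_of_commute h.symm n |>.symm

/-- The twist of a comodule by commuting maps `b`, `c` on `C` and a map `a` on `M`, where `c` is a
coalgebra morphism and `a` is compatible with `b`. -/
theorem isHomComodule_twist_s15 {C M : Type*} [AddCommGroup C] [Module k C]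
    [AddCommGroup M] [Module k M] (Δ : C →ₗ[k] C ⊗[k] C) (ρ : M →ₗ[k] C ⊗[k] M)
    (hcomod : TensorProduct.map LinearMap.id ρ ∘ₗ ρ =
      (TensorProduct.assoc k C C M).toLinearMap ∘ₗ (TensorProduct.map Δ LinearMap.id ∘ₗ ρ))
    (b c : C →ₗ[k] C) (a : M →ₗ[k] M) (hbc : b ∘ₗ c = c ∘ₗ b)
    (hc : TensorProduct.map c c ∘ₗ Δ = Δ ∘ₗ c)
    (ha : ρ ∘ₗ a = TensorProduct.map b a ∘ₗ ρ) :
    IsHomComodule (Δ ∘ₗ b) b a (TensorProduct.map c LinearMap.id ∘ₗ (ρ ∘ₗ a)) := by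
  constructor
  · calc (TensorProduct.map c LinearMap.id ∘ₗ (ρ ∘ₗ a)) ∘ₗ a
        = TensorProduct.map c LinearMap.id ∘ₗ (ρ ∘ₗ a) ∘ₗ a := rfl
      _ = (TensorProduct.map c LinearMap.id ∘ₗ TensorProduct.map b a) ∘ₗ ρ ∘ₗ a := by
          conv_lhs => rw [ha]
          rfl
      _ = (TensorProduct.map b a ∘ₗ TensorProduct.map c LinearMap.id) ∘ₗ ρ ∘ₗ a := by
          rw [← TensorProduct.map_comp, ← TensorProduct.map_comp, hbc]; rfl
      _ = _ := rfl
  · have hassoc : TensorProduct.map c (TensorProduct.map c LinearMap.id) ∘ₗ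
          (TensorProduct.assoc k C C M).toLinearMap =
        (TensorProduct.assoc k C C M).toLinearMap ∘ₗ
          TensorProduct.map (TensorProduct.map c c) LinearMap.id :=
      (TensorProduct.map_map_comp_assoc_eq c c LinearMap.id)
    calc TensorProduct.map b (TensorProduct.map c LinearMap.id ∘ₗ (ρ ∘ₗ a)) ∘ₗ
          (TensorProduct.map c LinearMap.id ∘ₗ (ρ ∘ₗ a))
        = (TensorProduct.map b (TensorProduct.map c LinearMap.id ∘ₗ (ρ ∘ₗ a)) ∘ₗ
          TensorProduct.map c LinearMap.id) ∘ₗ (ρ ∘ₗ a) := rfl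
      _ = (TensorProduct.map c (TensorProduct.map c LinearMap.id) ∘ₗ
            TensorProduct.map LinearMap.id ρ ∘ₗ TensorProduct.map b a) ∘ₗ (ρ ∘ₗ a) := by
          simp only [← TensorProduct.map_comp, hbc]; rfl
      _ = TensorProduct.map c (TensorProduct.map c LinearMap.id) ∘ₗ
            (TensorProduct.map LinearMap.id ρ ∘ₗ ρ) ∘ₗ (a ∘ₗ a) := by
          calc _ = TensorProduct.map c (TensorProduct.map c LinearMap.id) ∘ₗ
                TensorProduct.map LinearMap.id ρ ∘ₗ (TensorProduct.map b a ∘ₗ ρ) ∘ₗ a := rfl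
            _ = _ := by rw [← ha]; rfl
      _ = (TensorProduct.map c (TensorProduct.map c LinearMap.id) ∘ₗ
            (TensorProduct.assoc k C C M).toLinearMap) ∘ₗ
            TensorProduct.map Δ LinearMap.id ∘ₗ (ρ ∘ₗ a) ∘ₗ a := by rw [hcomod]; rfl
      _ = (TensorProduct.assoc k C C M).toLinearMap ∘ₗ
            (TensorProduct.map (TensorProduct.map c c) LinearMap.id ∘ₗ
              TensorProduct.map Δ LinearMap.id ∘ₗ TensorProduct.map b a) ∘ₗ (ρ ∘ₗ a) := by
          rw [hassoc, show (ρ ∘ₗ a) ∘ₗ a = TensorProduct.map b a ∘ₗ ρ ∘ₗ a by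
            conv_lhs => rw [ha]
            rfl]
          rfl
      _ = (TensorProduct.assoc k C C M).toLinearMap ∘ₗ
            (TensorProduct.map (Δ ∘ₗ b) a ∘ₗ TensorProduct.map c LinearMap.id) ∘ₗ (ρ ∘ₗ a) := by
          simp only [← TensorProduct.map_comp]
          rw [LinearMap.comp_assoc c b Δ, hbc, ← LinearMap.comp_assoc b c Δ,
            ← LinearMap.comp_assoc b Δ (TensorProduct.map c c), hc]
          rfl
      _ = _ := rfl

/-- Let `(C, Δ)` be a coassociative coalgebra, `M` a `C`-comodule in the
usual sense with structure map `ρ`, `αC : C → C` a coalgebra morphism and `αM : M → M` a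
linear map with `ρ ∘ αM = (αC ⊗ αM) ∘ ρ`.  Then for all `n, m ≥ 0` the map
`ρ_α^{n,m} = (αCⁿ ⊗ Id) ∘ ρ ∘ αM^(2ᵐ)` gives `(M, αM^(2ᵐ))` the structure of a comodule
over the Hom-coassociative coalgebra `C_β = (C, Δ ∘ β, β)` with `β = αC^(2ᵐ)`. -/
theorem twist_comodule_of_coassoc {C M : Type*} [AddCommGroup C] [Module k C]
    [AddCommGroup M] [Module k M]
    (Δ : C →ₗ[k] C ⊗[k] C)
    (hcoassoc : TensorProduct.map LinearMap.id Δ ∘ₗ Δ =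
      (TensorProduct.assoc k C C C).toLinearMap ∘ₗ (TensorProduct.map Δ LinearMap.id ∘ₗ Δ))
    (ρ : M →ₗ[k] C ⊗[k] M)
    (hcomod : TensorProduct.map LinearMap.id ρ ∘ₗ ρ =
      (TensorProduct.assoc k C C M).toLinearMap ∘ₗ (TensorProduct.map Δ LinearMap.id ∘ₗ ρ))
    (αC : C →ₗ[k] C)
    (hαC : TensorProduct.map αC αC ∘ₗ Δ = Δ ∘ₗ αC)
    (αM : M →ₗ[k] M)
    (hcompat : ρ ∘ₗ αM = TensorProduct.map αC αM ∘ₗ ρ) :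
    ∀ n m : ℕ, IsHomComodule (Δ ∘ₗ (αC ^ (2 ^ m))) (αC ^ (2 ^ m)) (αM ^ (2 ^ m))
      (TensorProduct.map (αC ^ n) LinearMap.id ∘ₗ (ρ ∘ₗ (αM ^ (2 ^ m)))) := by
  intro n m
  refine isHomComodule_twist_s15 Δ ρ hcomod _ _ _ ?_ ?_ (coaction_comp_pow ρ αC αM hcompat _)
  · exact (Commute.refl αC).pow_pow _ _
  · rw [← TensorProduct.map_pow]
    exact Module.End.commute_pow_left_of_commute hαC n
end

section
/- Let (H, μ, Δ, α_H) be a Hom-bialgebra over a commutative ring k, and let (M, α_M) and (N, α_N) be H-modules with structure maps ρ_M and ρ_N, respectively. Then the Hom-module (M ⊗ N, α_M ⊗ α_N) is an H-module with structure map ρ_{MN} = (ρ_M ⊗ ρ_N) ∘ (Id_H ⊗ τ_{H,M} ⊗ Id_N) ∘ (Δ ⊗ Id_M ⊗ Id_N) : H ⊗ M ⊗ N → M ⊗ N, i.e., x · (m ⊗ n) = Σ_(x) (x₁ m) ⊗ (x₂ n) where Δ(x) = Σ x₁ ⊗ x₂. -/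
/-! The map `map₂ ρM ρN` is the external action of `H ⊗ H`, with its componentwise multiplication
and twist, on `M ⊗ N`, and it satisfies the Hom-module axioms because they hold in each factor
(`IsHomModule.map₂`). In a Hom-bialgebra, `Δ : H → H ⊗ H` is compatible with the twists and the
multiplications, so this `H ⊗ H`-module restricts along `Δ` to an `H`-module
(`IsHomModule.comp`). -/

open TensorProduct LinearMap

variable {k : Type*} [CommRing k]

/-- External tensor product: modules over `A` and `B` give a module over `A ⊗ B`. -/
theorem IsHomModule.map₂ {A B M N : Type*} [AddCommGroup A] [Module k A]
    [AddCommGroup B] [Module k B]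
    [AddCommGroup M] [Module k M] [AddCommGroup N] [Module k N]
    {μA : A →ₗ[k] A →ₗ[k] A} {μB : B →ₗ[k] B →ₗ[k] B} {αA : A →ₗ[k] A} {αB : B →ₗ[k] B}
    {αM : M →ₗ[k] M} {αN : N →ₗ[k] N}
    {ρM : A →ₗ[k] M →ₗ[k] M} {ρN : B →ₗ[k] N →ₗ[k] N}
    (hM : IsHomModule μA αA αM ρM) (hN : IsHomModule μB αB αN ρN) :
    IsHomModule (TensorProduct.map₂ μA μB) (TensorProduct.map αA αB)
      (TensorProduct.map αM αN) (TensorProduct.map₂ ρM ρN) := by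
  constructor
  · intro a t
    induction a with
    | zero => simp
    | add a b ha hb => simp only [map_add, LinearMap.add_apply, ha, hb]
    | tmul a b =>
      induction t with
      | zero => simp
      | add s t hs ht => simp only [map_add, hs, ht]
      | tmul m n => simp [hM.1, hN.1]
  · intro a b t
    induction a with
    | zero => simp
    | add a a' ha ha' => simp only [map_add, LinearMap.add_apply, ha, ha']
    | tmul a a' =>
      induction b with
      | zero => simp
      | add b b' hb hb' => simp only [map_add, LinearMap.add_apply, hb, hb']
      | tmul b b' =>
        induction t with
        | zero => simp
        | add s t hs ht => simp only [map_add, hs, ht]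
        | tmul m n => simp [hM.2, hN.2]

/-- Restriction of scalars along a map `f` compatible with the twists and the multiplications. -/
theorem IsHomModule.comp {A B M : Type*} [AddCommGroup A] [Module k A]
    [AddCommGroup B] [Module k B] [AddCommGroup M] [Module k M]
    {μA : A →ₗ[k] A →ₗ[k] A} {μB : B →ₗ[k] B →ₗ[k] B} {αA : A →ₗ[k] A} {αB : B →ₗ[k] B}
    {αM : M →ₗ[k] M} {ρ : B →ₗ[k] M →ₗ[k] M} (h : IsHomModule μB αB αM ρ) (f : A →ₗ[k] B)
    (hα : ∀ a, f (αA a) = αB (f a)) (hμ : ∀ a b, f (μA a b) = μB (f a) (f b)) :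
    IsHomModule μA αA αM (ρ ∘ₗ f) := by
  constructor
  · intro a m
    simp only [LinearMap.comp_apply, hα, h.1]
  · intro a b m
    simp only [LinearMap.comp_apply, hα, hμ, h.2]

/-- If `(H, μ, Δ, αH)` is a Hom-bialgebra and `(M, αM)`, `(N, αN)` are
`H`-modules with structure maps `ρM`, `ρN`, then `(M ⊗ N, αM ⊗ αN)` is an `H`-module
with structure map `x · (m ⊗ n) = Σ (x₁ m) ⊗ (x₂ n)`, i.e.
`ρ_{MN} = (ρM ⊗ ρN) ∘ (Id ⊗ τ ⊗ Id) ∘ (Δ ⊗ Id ⊗ Id)`. -/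
theorem tensor_homModule {H M N : Type*} [AddCommGroup H] [Module k H]
    [AddCommGroup M] [Module k M] [AddCommGroup N] [Module k N]
    (μ : H →ₗ[k] H →ₗ[k] H) (Δ : H →ₗ[k] H ⊗[k] H) (αH : H →ₗ[k] H)
    (αM : M →ₗ[k] M) (αN : N →ₗ[k] N)
    (ρM : H →ₗ[k] M →ₗ[k] M) (ρN : H →ₗ[k] N →ₗ[k] N)
    (hH : IsHomBialgebra μ Δ αH)
    (hM : IsHomModule μ αH αM ρM)
    (hN : IsHomModule μ αH αN ρN) :
    IsHomModule μ αH (TensorProduct.map αM αN) (TensorProduct.map₂ ρM ρN ∘ₗ Δ) := by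
  obtain ⟨-, ⟨hα, -⟩, hμ⟩ := hH
  exact (hM.map₂ hN).comp Δ (fun a => (LinearMap.congr_fun hα a).symm) hμ
end

section
/- Let H = (H, μ_H, Δ_H, α_H) be a Hom-bialgebra over a commutative ring k, A = (A, μ_A, α_A) a Hom-associative algebra, and ρ : H ⊗ A → A an H-module Hom-algebra structure on A. For all integers n, k ≥ 0, the map ρ^{n,k} = α_A^(2^k − 1) ∘ ρ ∘ (α_H^n ⊗ Id_A) : H ⊗ A → A gives the k-th derived Hom-associative algebra A^k = (A, μ_A^(k) = α_A^(2^k − 1) ∘ μ_A, α_A^(2^k)) the structure of a module Hom-algebra over the k-th derived Hom-bialgebra H^k = (H, μ_H^(k) = α_H^(2^k − 1) ∘ μ_H, Δ_H^(k) = Δ_H ∘ α_H^(2^k − 1), α_H^(2^k)). -/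
/-!
Write `e = 2 ^ m - 1`, so that `2 ^ m = e + 1`. Since `ρ` and `μA` commute with the structure maps,
so do their iterates, and every term can be brought to a normal form in which all powers of
`αH` and `αA` act directly on the arguments; in particular
`ρ^{n,m} x a = ρ (αH ^ (e + n) x) (αA ^ e a)`.

* The module axiom for `(x, y, a)` becomes the original one at
  `(αH ^ (2e + n) x, αH ^ (2e + n) y, αA ^ (2e) a)`.
* The module Hom-algebra axiom for `(x, a, b)` becomes the original one at
  `(αH ^ (3e + n) x, αA ^ (2e) a, αA ^ (2e) b)`. On the right-hand side one uses
  that `Δ` commutes with `αH`, to move `αH ^ (2e + n)` across `Δ`.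
-/

open TensorProduct LinearMap

variable {k : Type*} [CommRing k]

/-- An `H`-module Hom-algebra structure on the Hom-associative algebra `(A, μA, αA)`:
an `H`-module structure `ρ` satisfying the module Hom-algebra axiom
`αH²(x)·(ab) = Σ (x₁·a)(x₂·b)`. -/
def IsModuleHomAlgebra {H A : Type*} [AddCommGroup H] [Module k H]
    [AddCommGroup A] [Module k A]
    (μH : H →ₗ[k] H →ₗ[k] H) (Δ : H →ₗ[k] H ⊗[k] H) (αH : H →ₗ[k] H)
    (μA : A →ₗ[k] A →ₗ[k] A) (αA : A →ₗ[k] A)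
    (ρ : H →ₗ[k] A →ₗ[k] A) : Prop :=
  IsHomModule μH αH αA ρ ∧
  ∀ (x : H) (a b : A), ρ (αH (αH x)) (μA a b) =
    TensorProduct.lift μA (TensorProduct.map₂ ρ ρ (Δ x) (a ⊗ₜ[k] b))

theorem pow_bilin {M N : Type*} [AddCommGroup M] [Module k M] [AddCommGroup N] [Module k N]
    (ρ : M →ₗ[k] N →ₗ[k] N) (f : M →ₗ[k] M) (g : N →ₗ[k] N)
    (h : ∀ x a, g (ρ x a) = ρ (f x) (g a)) (j : ℕ) (x : M) (a : N) :
    (g ^ j) (ρ x a) = ρ ((f ^ j) x) ((g ^ j) a) := by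
  induction j with
  | zero => simp
  | succ j ih => simp only [pow_succ', Module.End.mul_apply, ih, h]

theorem map_pow_comul {C : Type*} [AddCommGroup C] [Module k C]
    (Δ : C →ₗ[k] C ⊗[k] C) (α : C →ₗ[k] C)
    (h : TensorProduct.map α α ∘ₗ Δ = Δ ∘ₗ α) (j : ℕ) (x : C) :
    Δ ((α ^ j) x) = TensorProduct.map (α ^ j) (α ^ j) (Δ x) := by
  induction j with
  | zero => simp [Module.End.one_eq_id]
  | succ j ih =>
    have h' : Δ (α ((α ^ j) x)) = TensorProduct.map α α (Δ ((α ^ j) x)) :=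
      (LinearMap.congr_fun h _).symm
    rw [pow_succ', Module.End.mul_apply, h', ih, Module.End.mul_eq_comp,
      TensorProduct.map_comp, LinearMap.comp_apply]

/-- The right-hand side of the module Hom-algebra axiom for the derived structures, with an
arbitrary tensor `t` in place of the coproduct, in normal form. -/
theorem lift_map₂_twist {H A : Type*} [AddCommGroup H] [Module k H]
    [AddCommGroup A] [Module k A] (αH : H →ₗ[k] H)
    (μA : A →ₗ[k] A →ₗ[k] A) (αA : A →ₗ[k] A) (ρ : H →ₗ[k] A →ₗ[k] A)
    (hμ : ∀ a b, αA (μA a b) = μA (αA a) (αA b))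
    (hρ : ∀ x a, αA (ρ x a) = ρ (αH x) (αA a)) (n e : ℕ) (t : H ⊗[k] H) (a b : A) :
    TensorProduct.lift (μA.compr₂ (αA ^ e))
      (TensorProduct.map₂ (twistAction ρ (αH ^ n) (αA ^ e))
        (twistAction ρ (αH ^ n) (αA ^ e)) t (a ⊗ₜ[k] b)) =
    TensorProduct.lift μA (TensorProduct.map₂ ρ ρ
      (TensorProduct.map (αH ^ (e + e + n)) (αH ^ (e + e + n)) t)
      ((αA ^ (e + e)) a ⊗ₜ[k] (αA ^ (e + e)) b)) := by
  induction t with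
  | zero => simp
  | add s t hs ht => simp only [map_add, LinearMap.add_apply, hs, ht]
  | tmul x y =>
    simp [twistAction, pow_bilin μA αA αA hμ, pow_bilin ρ αH αA hρ, pow_add]

/-- If `(H, μH, Δ, αH)` is a Hom-bialgebra, `(A, μA, αA)` a
Hom-associative algebra, and `ρ` an `H`-module Hom-algebra structure on `A`, then for
all `n, m ≥ 0` the map `ρ^{n,m} = αA^(2ᵐ−1) ∘ ρ ∘ (αHⁿ ⊗ Id)` gives the `m`-th derived
Hom-associative algebra `Aᵐ` the structure of a module Hom-algebra over the `m`-th
derived Hom-bialgebra `Hᵐ`. -/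
theorem derived_moduleHomAlgebra {H A : Type*} [AddCommGroup H] [Module k H]
    [AddCommGroup A] [Module k A]
    (μH : H →ₗ[k] H →ₗ[k] H) (Δ : H →ₗ[k] H ⊗[k] H) (αH : H →ₗ[k] H)
    (μA : A →ₗ[k] A →ₗ[k] A) (αA : A →ₗ[k] A)
    (ρ : H →ₗ[k] A →ₗ[k] A)
    (hH : IsHomBialgebra μH Δ αH)
    (hA : IsHomAssoc μA αA)
    (hmha : IsModuleHomAlgebra μH Δ αH μA αA ρ) :
    ∀ n m : ℕ, IsModuleHomAlgebra
      (μH.compr₂ (αH ^ (2 ^ m - 1))) (Δ ∘ₗ (αH ^ (2 ^ m - 1))) (αH ^ (2 ^ m))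
      (μA.compr₂ (αA ^ (2 ^ m - 1))) (αA ^ (2 ^ m))
      (twistAction ρ (αH ^ n) (αA ^ (2 ^ m - 1))) := by
  obtain ⟨⟨hμH, -⟩, ⟨hΔ, -⟩, -⟩ := hH
  obtain ⟨hμA, -⟩ := hA
  obtain ⟨⟨hρ, hmod⟩, halg⟩ := hmha
  intro n m
  obtain ⟨e, he⟩ : ∃ e, 2 ^ m = e + 1 := ⟨2 ^ m - 1, by have := Nat.one_le_two_pow (n := m); omega⟩
  simp only [he, Nat.add_sub_cancel]
  have pH := pow_bilin μH αH αH hμH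
  have pA := pow_bilin μA αA αA hμA
  have pρ := pow_bilin ρ αH αA hρ
  have cH (i j : ℕ) (x : H) : (αH ^ i) ((αH ^ j) x) = (αH ^ (i + j)) x := by
    rw [pow_add, Module.End.mul_apply]
  have cA (i j : ℕ) (x : A) : (αA ^ i) ((αA ^ j) x) = (αA ^ (i + j)) x := by
    rw [pow_add, Module.End.mul_apply]
  have sH (j : ℕ) (x : H) : αH ((αH ^ j) x) = (αH ^ (j + 1)) x := by
    rw [pow_succ', Module.End.mul_apply]
  have sA (j : ℕ) (x : A) : αA ((αA ^ j) x) = (αA ^ (j + 1)) x := by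
    rw [pow_succ', Module.End.mul_apply]
  have tw (x : H) (a : A) : twistAction ρ (αH ^ n) (αA ^ e) x a =
      ρ ((αH ^ (e + n)) x) ((αA ^ e) a) := by
    simp [twistAction, pρ, pow_add]
  refine ⟨⟨fun x a => ?_, fun x y a => ?_⟩, fun x a b => ?_⟩
  · simp only [tw, pρ, cH, cA]
    congr 2 <;> ring_nf
  · have key := hmod ((αH ^ (e + e + n)) x) ((αH ^ (e + e + n)) y) ((αA ^ (e + e)) a)
    simp only [tw, pρ, pH, LinearMap.compr₂_apply, cH, cA, sH, sA] at key ⊢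
    convert key using 3 <;> ring_nf
  · rw [lift_map₂_twist αH μA αA ρ hμA hρ, LinearMap.comp_apply, ← map_pow_comul Δ αH hΔ]
    have key := halg ((αH ^ (e + e + n + e)) x) ((αA ^ (e + e)) a) ((αA ^ (e + e)) b)
    simp only [tw, pA, LinearMap.compr₂_apply, cH, cA, sH] at key ⊢
    rw [← key]
    congr 3
    ring_nf
end
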